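/- For all multisets of fuzzy values S, T, and U, (S ∖ U) ∪ (T ∖ U) ⊆ (S ∪ T) ∖ U. -/

import Mathlib

/-!
The proof works with order statistics. Write `C = (S ∪ T) ∖ U`. Since `(S ∪ T)[i] = S[i] ∨ T[i]`,
the `i`-th term defining `S ∖ U` (or `T ∖ U`) is at most the `i`-th term defining `C`. These
sequences of terms need not be decreasing, but order statistics are monotone under termwise
comparison (`FuzzyMS.nth_map_range_mono`, proved by counting the elements above a threshold), so
`(S ∖ U)[k] ∨ (T ∖ U)[k] ≤ C[k]` for every `k`. Hence `((S ∖ U) ∪ (T ∖ U)) ∪ C` lists exactly the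
order statistics of `C`, and `R = C` is a witness of the inclusion.
-/

/-- The `k`-th largest element (1-indexed) of a finite multiset of fuzzy values,
with the convention that it is `0` when `k` exceeds the cardinality. -/
noncomputable def FuzzyMS.nth (S : Multiset unitInterval) (k : ℕ) : unitInterval :=
  ((S.sort (· ≤ ·)).reverse).getD (k - 1) 0

/-- Equivalence of multisets of fuzzy values: equal multiplicities on `(0,1]`. -/
noncomputable def FuzzyMS.Equiv (S T : Multiset unitInterval) : Prop :=
  ∀ x : unitInterval, 0 < x → S.count x = T.count x

/-- Fuzzy union: `{S[1] ∨ T[1], …, S[n] ∨ T[n]}` where `n = max(|S|,|T|)`. -/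
noncomputable def FuzzyMS.union (S T : Multiset unitInterval) : Multiset unitInterval :=
  (Multiset.range (max (Multiset.card S) (Multiset.card T))).map
    (fun i => FuzzyMS.nth S (i + 1) ⊔ FuzzyMS.nth T (i + 1))

/-- Fuzzy intersection: `{S[1] ∧ T[1], …, S[n] ∧ T[n]}` where `n = max(|S|,|T|)`. -/
noncomputable def FuzzyMS.inter (S T : Multiset unitInterval) : Multiset unitInterval :=
  (Multiset.range (max (Multiset.card S) (Multiset.card T))).map
    (fun i => FuzzyMS.nth S (i + 1) ⊓ FuzzyMS.nth T (i + 1))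

/-- Fuzzy difference: `{S[1]·δ₁, …, S[m]·δ_m}` with `m = |S|`,
`δ_k = 1` if `S[k] > T[k]` and `δ_k = 0` otherwise. -/
noncomputable def FuzzyMS.diff (S T : Multiset unitInterval) : Multiset unitInterval :=
  (Multiset.range (Multiset.card S)).map
    (fun i => if FuzzyMS.nth T (i + 1) < FuzzyMS.nth S (i + 1) then FuzzyMS.nth S (i + 1) else 0)

/-- `S ⊆ T` iff there exists `R` with `S ∪ R ≡ T`. (The disjoint union `S ⊎ T` is `S + T`.) -/
noncomputable def FuzzyMS.Subset (S T : Multiset unitInterval) : Prop :=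
  ∃ R : Multiset unitInterval, FuzzyMS.Equiv (FuzzyMS.union S R) T

/-- `Count≥c(S)`: the number of elements of `S` (with multiplicity) that are `≥ c`. -/
noncomputable def FuzzyMS.countGe (c : unitInterval) (S : Multiset unitInterval) : ℕ :=
  (S.filter (fun x => c ≤ x)).card

/-- The threshold `c` is reached by the entry at index `i` of a decreasing list exactly when
more than `i` entries reach it. Positivity of `c` excludes the default value `0`. -/
lemma FuzzyMS.le_getD_iff (c : unitInterval) (hc : 0 < c) (l : List unitInterval)
    (hl : l.Pairwise (· ≥ ·)) (i : ℕ) :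
    c ≤ l.getD i 0 ↔ i < l.countP (fun x => decide (c ≤ x)) := by
  induction l generalizing i with
  | nil => simpa using hc.ne'
  | cons a l ih =>
    rw [List.pairwise_cons] at hl
    by_cases hca : c ≤ a
    · cases i with
      | zero => simp [hca]
      | succ i => simpa [hca] using ih hl.2 i
    · have h0 : l.countP (fun x => decide (c ≤ x)) = 0 := by
        rw [List.countP_eq_zero]
        intro x hx
        simpa using lt_of_le_of_lt (hl.1 x hx) (not_le.mp hca)
      cases i with
      | zero => simp [hca, h0]
      | succ i =>
        have := ih hl.2 i
        rw [h0] at this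
        simpa [hca, h0] using this

lemma FuzzyMS.pairwise_reverse_sort (S : Multiset unitInterval) :
    ((S.sort (· ≤ ·)).reverse).Pairwise (· ≥ ·) := by
  rw [List.pairwise_reverse]
  exact S.pairwise_sort (· ≤ ·)

lemma FuzzyMS.coe_reverse_sort (S : Multiset unitInterval) :
    (((S.sort (· ≤ ·)).reverse : List unitInterval) : Multiset unitInterval) = S := by
  rw [Multiset.coe_reverse, Multiset.sort_eq]

lemma FuzzyMS.le_nth_iff (c : unitInterval) (hc : 0 < c) (S : Multiset unitInterval) (i : ℕ) :
    c ≤ FuzzyMS.nth S (i + 1) ↔ i < S.countP (fun x => c ≤ x) := by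
  have h := FuzzyMS.le_getD_iff c hc _ (FuzzyMS.pairwise_reverse_sort S) i
  rw [← Multiset.coe_countP, FuzzyMS.coe_reverse_sort] at h
  exact h

lemma FuzzyMS.nth_antitone (S : Multiset unitInterval) :
    Antitone (fun i => FuzzyMS.nth S (i + 1)) := by
  intro i j hij
  rcases (unitInterval.nonneg' (t := FuzzyMS.nth S (j + 1))).eq_or_lt with h | h
  · simp [← h]
  · exact (FuzzyMS.le_nth_iff _ h S i).2
      (lt_of_le_of_lt hij ((FuzzyMS.le_nth_iff _ h S j).1 le_rfl))

lemma FuzzyMS.nth_eq_zero (S : Multiset unitInterval) (i : ℕ) (h : Multiset.card S ≤ i) :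
    FuzzyMS.nth S (i + 1) = 0 := by
  unfold FuzzyMS.nth
  rw [List.getD_eq_default]
  simpa using h

/-- Order statistics are monotone under termwise comparison of (not necessarily decreasing)
sequences. -/
lemma FuzzyMS.nth_map_range_mono (f g : ℕ → unitInterval) (n m : ℕ) (hnm : n ≤ m)
    (hfg : ∀ i, f i ≤ g i) (i : ℕ) :
    FuzzyMS.nth ((Multiset.range n).map f) (i + 1) ≤
      FuzzyMS.nth ((Multiset.range m).map g) (i + 1) := by
  rcases (unitInterval.nonneg' (t := FuzzyMS.nth ((Multiset.range n).map f) (i + 1))).eq_or_lt with h | h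
  · simp [← h]
  · rw [FuzzyMS.le_nth_iff _ h]
    refine lt_of_lt_of_le ((FuzzyMS.le_nth_iff _ h _ i).1 le_rfl) ?_
    rw [Multiset.countP_map, Multiset.countP_map]
    refine Multiset.card_le_card (le_trans
      (Multiset.monotone_filter_right _ fun j hj => le_trans hj (hfg j))
      (Multiset.filter_le_filter _ (Multiset.range_le.2 hnm)))

lemma FuzzyMS.nth_map_range (f : ℕ → unitInterval) (hf : Antitone f) (n i : ℕ) (hi : i < n) :
    FuzzyMS.nth ((Multiset.range n).map f) (i + 1) = f i := by
  have h : (((Multiset.range n).map f).sort (· ≤ ·)).reverse = (List.range n).map f := by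
    refine List.Perm.eq_of_pairwise (le := (· ≥ ·)) (fun a b _ _ h₁ h₂ => le_antisymm h₂ h₁)
      (FuzzyMS.pairwise_reverse_sort _) ?_ ?_
    · rw [List.pairwise_map]
      exact List.pairwise_lt_range.imp fun h => hf h.le
    · rw [← Multiset.coe_eq_coe, FuzzyMS.coe_reverse_sort]
      rfl
  simp [FuzzyMS.nth, h, hi]

lemma FuzzyMS.nth_union (S T : Multiset unitInterval) (i : ℕ) :
    FuzzyMS.nth (FuzzyMS.union S T) (i + 1) =
      FuzzyMS.nth S (i + 1) ⊔ FuzzyMS.nth T (i + 1) := by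
  by_cases hi : i < max (Multiset.card S) (Multiset.card T)
  · exact FuzzyMS.nth_map_range _
      (fun a b h => sup_le_sup (FuzzyMS.nth_antitone S h) (FuzzyMS.nth_antitone T h)) _ i hi
  · rw [not_lt, max_le_iff] at hi
    rw [FuzzyMS.nth_eq_zero S i hi.1, FuzzyMS.nth_eq_zero T i hi.2, FuzzyMS.nth_eq_zero, sup_idem]
    simpa [FuzzyMS.union] using hi

lemma FuzzyMS.map_nth_range (S : Multiset unitInterval) :
    (Multiset.range (Multiset.card S)).map (fun i => FuzzyMS.nth S (i + 1)) = S := by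
  conv_rhs => rw [← FuzzyMS.coe_reverse_sort S]
  change (((List.range (Multiset.card S)).map _ : List unitInterval) : Multiset unitInterval) = _
  congr 1
  apply List.ext_getElem
  · simp
  · intro i h₁ h₂
    simp only [List.getElem_map, List.getElem_range, FuzzyMS.nth, Nat.add_sub_cancel]
    exact List.getD_eq_getElem _ _ h₂

/-- The difference is monotone in its first argument, in terms of order statistics. -/
lemma FuzzyMS.nth_diff_mono (S V U : Multiset unitInterval)
    (hcard : Multiset.card S ≤ Multiset.card V)
    (h : ∀ i, FuzzyMS.nth S (i + 1) ≤ FuzzyMS.nth V (i + 1)) (i : ℕ) :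
    FuzzyMS.nth (FuzzyMS.diff S U) (i + 1) ≤ FuzzyMS.nth (FuzzyMS.diff V U) (i + 1) := by
  refine FuzzyMS.nth_map_range_mono _ _ _ _ hcard (fun j => ?_) i
  split_ifs with h₁ h₂
  · exact h j
  · exact absurd (h₁.trans_le (h j)) h₂
  · exact unitInterval.nonneg'
  · exact le_rfl

theorem union_diff_subset (S T U : Multiset unitInterval) :
    FuzzyMS.Subset (FuzzyMS.union (FuzzyMS.diff S U) (FuzzyMS.diff T U))
      (FuzzyMS.diff (FuzzyMS.union S T) U) := by
  refine ⟨FuzzyMS.diff (FuzzyMS.union S T) U, fun x _ => ?_⟩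
  have hle : ∀ i, FuzzyMS.nth (FuzzyMS.union (FuzzyMS.diff S U) (FuzzyMS.diff T U)) (i + 1) ≤
      FuzzyMS.nth (FuzzyMS.diff (FuzzyMS.union S T) U) (i + 1) := by
    intro i
    rw [FuzzyMS.nth_union]
    refine sup_le (FuzzyMS.nth_diff_mono _ _ _ (by simp [FuzzyMS.union]) (fun j => ?_) i)
      (FuzzyMS.nth_diff_mono _ _ _ (by simp [FuzzyMS.union]) (fun j => ?_) i)
    · rw [FuzzyMS.nth_union]
      exact le_sup_left
    · rw [FuzzyMS.nth_union]
      exact le_sup_right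
  have hcard : Multiset.card (FuzzyMS.union (FuzzyMS.diff S U) (FuzzyMS.diff T U)) =
      Multiset.card (FuzzyMS.diff (FuzzyMS.union S T) U) := by
    simp [FuzzyMS.union, FuzzyMS.diff]
  rw [FuzzyMS.union, hcard, max_self]
  simp only [sup_eq_right.2 (hle _)]
  rw [FuzzyMS.map_nth_range]
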